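/- Trace decomposition of the softmax covariance: for every logit vector z ∈ ℝ^C with C ≥ 2 and true class ⋆, writing ξ = 1 − ‖ρ‖₂², one has Tr(diag(p) − p p^T) = 2 p_⋆ p_† + p_†² ξ, Tr(p_⋆ p_† (∇_z s)(∇_z s)^T) = p_⋆ p_† (2 − ξ), and the trace of the dropped residual block equals p_† ξ, so the full trace is the sum of the retained and dropped traces. -/

import Mathlib

/-!
The distribution `p` is the mixture, with weights `p_⋆` and `p_†`, of the point mass `e_⋆` and of
the conditional distribution `ρ` given that the class is not `⋆`, and `∇_z s = ρ - e_⋆`. Since a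
point mass has no covariance, the law of total covariance reads
`diag p - p pᵀ = p_⋆ p_† (∇_z s)(∇_z s)ᵀ + p_† (diag ρ - ρ ρᵀ)`, so the traces add up. The first
term has trace `p_⋆ p_† ‖ρ - e_⋆‖² = p_⋆ p_† (2 - ξ)` as `ρ` vanishes at `⋆`, and the second one
`p_† (1 - ‖ρ‖²) = p_† ξ` as `ρ` sums to `1`.
-/

open Matrix

section CategoricalCovariance

variable {ι R : Type*} [DecidableEq ι]

section Ring

variable [Ring R]

/-- The covariance matrix `diag v - v vᵀ` of the one-hot encoding of a categorical random variable
with probabilities `v`. It is defined for every vector `v`, of total mass `1` or not. -/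
def categoricalCovariance (v : ι → R) : Matrix ι ι R :=
  diagonal v - vecMulVec v v

theorem categoricalCovariance_apply (v : ι → R) (i j : ι) :
    categoricalCovariance v i j = (if i = j then v i else 0) - v i * v j := by
  rw [categoricalCovariance, Matrix.sub_apply, diagonal_apply, vecMulVec_apply]

theorem categoricalCovariance_single_one (i : ι) :
    categoricalCovariance (Pi.single i (1 : R)) = 0 := by
  rw [categoricalCovariance, diagonal_single, single_eq_single_vecMulVec_single, sub_self]

theorem trace_categoricalCovariance [Fintype ι] (v : ι → R) :
    trace (categoricalCovariance v) = ∑ i, v i - v ⬝ᵥ v := by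
  rw [categoricalCovariance, trace_sub, trace_diagonal, trace_vecMulVec]

theorem sub_single_one_dotProduct_self [Fintype ι] (v : ι → R) (i : ι) :
    (v - Pi.single i 1) ⬝ᵥ (v - Pi.single i 1) = v ⬝ᵥ v - 2 * v i + 1 := by
  simp only [sub_dotProduct, dotProduct_sub, dotProduct_single_one, single_one_dotProduct,
    Pi.sub_apply, Pi.single_eq_same, two_mul]
  abel

end Ring

theorem categoricalCovariance_smul_add_smul [CommRing R] {a b : R} (hab : a + b = 1)
    (v w : ι → R) :
    categoricalCovariance (a • v + b • w) =
      (a * b) • vecMulVec (w - v) (w - v) +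
        (a • categoricalCovariance v + b • categoricalCovariance w) := by
  obtain rfl : b = 1 - a := eq_sub_of_add_eq' hab
  ext i j
  simp only [categoricalCovariance_apply, Matrix.add_apply, Matrix.smul_apply, vecMulVec_apply,
    Pi.add_apply, Pi.sub_apply, Pi.smul_apply, smul_eq_mul]
  split_ifs <;> ring

end CategoricalCovariance

section RestDistribution

variable {ι K : Type*} [DecidableEq ι] [Field K] {p : ι → K} {i : ι}

/-- The conditional distribution, given that the class is not `i`, of a class with probabilities
`p`. This is the `ρ` of the theorem, extended by `0` at `i` so that it lives on the same index type
as `p`; since `0⁻¹ = 0`, it is `0` everywhere if `p i = 1`. -/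
def restDistribution (p : ι → K) (i : ι) : ι → K :=
  (1 - p i)⁻¹ • Function.update p i 0

theorem restDistribution_self (p : ι → K) (i : ι) : restDistribution p i i = 0 := by
  simp [restDistribution]

theorem restDistribution_of_ne {j : ι} (hj : j ≠ i) :
    restDistribution p i j = p j / (1 - p i) := by
  simp [restDistribution, hj, div_eq_inv_mul]

theorem smul_single_one_add_smul_restDistribution (hi : p i ≠ 1) :
    p i • Pi.single i 1 + (1 - p i) • restDistribution p i = p := by
  rw [restDistribution, smul_inv_smul₀ (sub_ne_zero.mpr hi.symm)]
  ext j
  obtain rfl | hj := eq_or_ne j i <;> simp [*]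

theorem sum_restDistribution [Fintype ι] (hp : ∑ j, p j = 1) (hi : p i ≠ 1) :
    ∑ j, restDistribution p i j = 1 := by
  have hrest : ∑ j, Function.update p i 0 j = 1 - p i := by
    rw [Finset.sum_update_of_mem (Finset.mem_univ i), zero_add, ← hp,
      Finset.sum_eq_add_sum_sdiff_singleton_of_mem (Finset.mem_univ i) p, add_sub_cancel_left]
  simp only [restDistribution, Pi.smul_apply, smul_eq_mul]
  rw [← Finset.mul_sum, hrest, inv_mul_cancel₀ (sub_ne_zero.mpr hi.symm)]

theorem restDistribution_dotProduct_self [Fintype ι] (p : ι → K) (i : ι) :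
    restDistribution p i ⬝ᵥ restDistribution p i =
      ∑ j ∈ Finset.univ.erase i, (p j / (1 - p i)) ^ 2 := by
  rw [dotProduct, ← Finset.add_sum_erase _ _ (Finset.mem_univ i), restDistribution_self, mul_zero,
    zero_add]
  refine Finset.sum_congr rfl fun j hj => ?_
  rw [restDistribution_of_ne (Finset.ne_of_mem_erase hj), sq]

theorem categoricalCovariance_eq_restDistribution (hi : p i ≠ 1) :
    categoricalCovariance p =
      (p i * (1 - p i)) •
          vecMulVec (restDistribution p i - Pi.single i 1) (restDistribution p i - Pi.single i 1) +
        (1 - p i) • categoricalCovariance (restDistribution p i) := by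
  conv_lhs => rw [← smul_single_one_add_smul_restDistribution hi]
  rw [categoricalCovariance_smul_add_smul (add_sub_cancel _ _), categoricalCovariance_single_one,
    smul_zero, zero_add]

end RestDistribution

section Softmax

variable {ι : Type*} [Fintype ι]

/-- The softmax of the logit vector `z`: the probabilities proportional to `exp z`. -/
noncomputable def softmax (z : ι → ℝ) (i : ι) : ℝ :=
  Real.exp (z i) / ∑ j, Real.exp (z j)

theorem sum_exp_pos [Nonempty ι] (z : ι → ℝ) : 0 < ∑ j, Real.exp (z j) :=
  Finset.sum_pos (fun j _ => Real.exp_pos (z j)) Finset.univ_nonempty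

theorem softmax_pos [Nonempty ι] (z : ι → ℝ) (i : ι) : 0 < softmax z i :=
  div_pos (Real.exp_pos _) (sum_exp_pos z)

theorem sum_softmax [Nonempty ι] (z : ι → ℝ) : ∑ i, softmax z i = 1 := by
  simp only [softmax, ← Finset.sum_div, div_self (sum_exp_pos z).ne']

theorem softmax_lt_one [Nontrivial ι] (z : ι → ℝ) (i : ι) : softmax z i < 1 := by
  obtain ⟨j, hji⟩ := exists_ne i
  rw [← sum_softmax z]
  exact Finset.single_lt_sum hji (Finset.mem_univ i) (Finset.mem_univ j) (softmax_pos z j)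
    fun k _ _ => (softmax_pos z k).le

end Softmax

theorem softmax_covariance_trace_decomposition_general {K : Type*} [Field K]
    {ι : Type*} [Fintype ι] [DecidableEq ι] (star : ι)
    (p : ι → K) (hp : ∑ j, p j = 1) (hstar : p star ≠ 1)
    (pdag : K) (hpdag : pdag = 1 - p star)
    (ρ : ι → K) (hρ : ∀ j, j ≠ star → ρ j = p j / pdag)
    (ξ : K) (hξ : ξ = 1 - ∑ j ∈ Finset.univ.erase star, ρ j ^ 2)
    (g : ι → K) (hg : ∀ c, g c = if c = star then -1 else ρ c)
    (B : Matrix ι ι K)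
    (hB : ∀ c c', B c c' =
      if c = star ∨ c' = star then 0
      else (if c = c' then ρ c else 0) - ρ c * ρ c') :
    trace (diagonal p - vecMulVec p p) = 2 * (p star * pdag) + pdag ^ 2 * ξ ∧
    trace ((p star * pdag) • vecMulVec g g) = p star * pdag * (2 - ξ) ∧
    trace (pdag • B) = pdag * ξ ∧
    trace (diagonal p - vecMulVec p p) =
      trace ((p star * pdag) • vecMulVec g g) + trace (pdag • B) := by
  subst hpdag
  let r := restDistribution p star
  have r_star : r star = 0 := restDistribution_self p star
  have r_of_ne (j) (hj : j ≠ star) : r j = ρ j := (restDistribution_of_ne hj).trans (hρ j hj).symm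
  have g_eq : g = r - Pi.single star 1 := by
    ext c
    by_cases hc : c = star <;> simp [hg, hc, r_star, r_of_ne]
  have B_eq : B = categoricalCovariance r := by
    ext c c'
    rw [hB, categoricalCovariance_apply]
    by_cases hc : c = star <;> by_cases hc' : c' = star <;> simp [hc, hc', r_star, r_of_ne]
  have r_sq : r ⬝ᵥ r = 1 - ξ := by
    rw [hξ, sub_sub_cancel, restDistribution_dotProduct_self]
    exact Finset.sum_congr rfl fun j hj => by rw [hρ j (Finset.ne_of_mem_erase hj)]
  have retained : trace ((p star * (1 - p star)) • vecMulVec g g) =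
      p star * (1 - p star) * (2 - ξ) := by
    rw [trace_smul, smul_eq_mul, trace_vecMulVec, g_eq, sub_single_one_dotProduct_self, r_sq,
      r_star]
    ring
  have dropped : trace ((1 - p star) • B) = (1 - p star) * ξ := by
    rw [trace_smul, B_eq, trace_categoricalCovariance, sum_restDistribution hp hstar, r_sq,
      sub_sub_cancel, smul_eq_mul]
  have additive : trace (diagonal p - vecMulVec p p) =
      trace ((p star * (1 - p star)) • vecMulVec g g) + trace ((1 - p star) • B) := by
    rw [← trace_add, g_eq, B_eq, ← categoricalCovariance_eq_restDistribution hstar,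
      categoricalCovariance]
  refine ⟨?_, retained, dropped, additive⟩
  rw [additive, retained, dropped]
  ring

/-- Trace decomposition of the softmax covariance: with `ξ = 1 - ‖ρ‖₂²`,
`Tr(diag p - p pᵀ) = 2 p_⋆ p_† + p_†² ξ`, the retained true-vs-rest term has
trace `p_⋆ p_† (2 - ξ)`, the dropped residual block has trace `p_† ξ`, and
the full trace is the sum of the retained and dropped traces. -/
theorem softmax_covariance_trace_decomposition
    (C : ℕ) (hC : 2 ≤ C) (star : Fin C) (z : Fin C → ℝ)
    (p : Fin C → ℝ) (hp : ∀ c, p c = Real.exp (z c) / ∑ j, Real.exp (z j))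
    (pdag : ℝ) (hpdag : pdag = 1 - p star)
    (ρ : Fin C → ℝ) (hρ : ∀ j, j ≠ star → ρ j = p j / pdag)
    (ξ : ℝ) (hξ : ξ = 1 - ∑ j ∈ Finset.univ.erase star, ρ j ^ 2)
    (g : Fin C → ℝ) (hg : ∀ c, g c = if c = star then -1 else ρ c)
    (B : Matrix (Fin C) (Fin C) ℝ)
    (hB : ∀ c c', B c c' =
      if c = star ∨ c' = star then 0
      else (if c = c' then ρ c else 0) - ρ c * ρ c') :
    Matrix.trace (Matrix.diagonal p - Matrix.vecMulVec p p)
        = 2 * (p star * pdag) + pdag ^ 2 * ξ ∧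
    Matrix.trace ((p star * pdag) • Matrix.vecMulVec g g)
        = p star * pdag * (2 - ξ) ∧
    Matrix.trace (pdag • B) = pdag * ξ ∧
    Matrix.trace (Matrix.diagonal p - Matrix.vecMulVec p p)
        = Matrix.trace ((p star * pdag) • Matrix.vecMulVec g g)
          + Matrix.trace (pdag • B) := by
  obtain rfl : p = softmax z := funext hp
  have : Nontrivial (Fin C) := Fin.nontrivial_iff_two_le.mpr hC
  exact softmax_covariance_trace_decomposition_general star _ (sum_softmax z)
    (softmax_lt_one z star).ne pdag hpdag ρ hρ ξ hξ g hg B hB
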